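/- arXiv:1711.09768 — 13 statements merged into one kernel-verified Lean document; each statement's English description precedes it below -/
import Mathlib

section
/- Fix real numbers p > 0, a > 0, p_I ≥ 0, c_I ∈ [0,1] and R̄ > 0, and set β = 1 − p/(2^{2·R̄} − 1). For every p_S ≥ 0 and c_S ∈ [0,1], the primary-user rate constraint R(p_S, c_S) ≥ R̄ holds if and only if a²·p_S²·(1 − c_S²) ≤ (1 − β)·(p + 2·(1 + a·p_S + p_I)) − 1 − 2·(a·p_S + p_I) − p_I²·(1 − c_I²) − 2·a·p_S·p_I·(1 − c_S·c_I). -/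
/-- Primary-user rate in the single-secondary-user canonical model: the PU has
canonical power `p`, the SU interferes through gain `a` with power `pS` and
circularity coefficient `cS`, and the PU receiver is corrupted by improper
noise of power `pI` and circularity coefficient `cI` (plus unit proper noise). -/
noncomputable def Rpu (p a pI cI pS cS : ℝ) : ℝ :=
  (1/2) * Real.logb 2 (((1 + p + a*pS + pI)^2 - (a*pS*cS + pI*cI)^2) /
    ((1 + a*pS + pI)^2 - (a*pS*cS + pI*cI)^2))

/-- the PU rate constraint `Rpu ≥ R̄` holds iff the quadratic
inequality (Eq. (12) in the paper) holds. -/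
theorem stmt0 (p a pI cI Rbar β pS cS : ℝ)
    (hp : 0 < p) (ha : 0 < a) (hpI : 0 ≤ pI) (hcI : cI ∈ Set.Icc (0:ℝ) 1)
    (hR : 0 < Rbar) (hβ : β = 1 - p / ((2:ℝ) ^ (2 * Rbar) - 1))
    (hpS : 0 ≤ pS) (hcS : cS ∈ Set.Icc (0:ℝ) 1) :
    Rpu p a pI cI pS cS ≥ Rbar ↔
      a^2 * pS^2 * (1 - cS^2) ≤
        (1 - β) * (p + 2*(1 + a*pS + pI)) - 1 - 2*(a*pS + pI)
          - pI^2 * (1 - cI^2) - 2*a*pS*pI*(1 - cS*cI) := by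
  obtain ⟨hcI0, hcI1⟩ := hcI
  obtain ⟨hcS0, hcS1⟩ := hcS
  have hK : (1:ℝ) < (2:ℝ) ^ (2 * Rbar) := Real.one_lt_rpow (by norm_num) (by linarith)
  have hq : 0 ≤ a * pS := by positivity
  have h1 : a*pS*cS ≤ a*pS := mul_le_of_le_one_right hq hcS1
  have h2 : pI*cI ≤ pI := mul_le_of_le_one_right hpI hcI1
  have h3 : 0 ≤ a*pS*cS := by positivity
  have h4 : 0 ≤ pI*cI := by positivity
  have hD : 0 < (1 + a*pS + pI)^2 - (a*pS*cS + pI*cI)^2 := by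
    have : (a*pS*cS + pI*cI)^2 < (1 + a*pS + pI)^2 :=
      pow_lt_pow_left₀ (by linarith) (by linarith) (by norm_num)
    linarith
  have hN : (1 + p + a*pS + pI)^2 - (a*pS*cS + pI*cI)^2
      = ((1 + a*pS + pI)^2 - (a*pS*cS + pI*cI)^2) + p * (p + 2*(1 + a*pS + pI)) := by ring
  have hNpos : 0 < (1 + p + a*pS + pI)^2 - (a*pS*cS + pI*cI)^2 := by
    rw [hN]; positivity
  have e1 : Rpu p a pI cI pS cS ≥ Rbar ↔ 2 * Rbar ≤
      Real.logb 2 (((1 + p + a*pS + pI)^2 - (a*pS*cS + pI*cI)^2) /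
        ((1 + a*pS + pI)^2 - (a*pS*cS + pI*cI)^2)) := by
    unfold Rpu
    constructor <;> intro h <;> linarith
  rw [e1, Real.le_logb_iff_rpow_le (by norm_num) (div_pos hNpos hD), le_div_iff₀ hD, hN]
  have hb : 1 - β = p / ((2:ℝ) ^ (2 * Rbar) - 1) := by rw [hβ]; ring
  rw [hb]
  generalize (2:ℝ) ^ (2 * Rbar) = K at hK
  have hK' : 0 < K - 1 := by linarith
  have e2 : (1 + a*pS + pI)^2 - (a*pS*cS + pI*cI)^2 ≤ p / (K - 1) * (p + 2*(1 + a*pS + pI)) ↔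
      ((1 + a*pS + pI)^2 - (a*pS*cS + pI*cI)^2) * (K - 1) ≤ p * (p + 2*(1 + a*pS + pI)) := by
    rw [div_mul_eq_mul_div, le_div_iff₀ hK']
  constructor
  · intro h
    have := e2.2 (by linarith)
    linarith
  · intro h
    have := e2.1 (by linarith)
    linarith
end

section
/- Fix real numbers p > 0, a > 0, p_I ≥ 0, c_I ∈ [0,1], R̄ > 0 and a power budget P_S ≥ 0. There exist p_S ∈ [0, P_S] and c_S ∈ [0,1] with R(p_S, c_S) ≥ R̄ if and only if R(0, 0) ≥ R̄; that is, the problem 𝒫_IN is feasible exactly when the required primary rate does not exceed the primary rate achievable in the absence of secondary interference. -/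
/-- problem `𝒫_IN` is feasible iff the required primary rate does not
exceed the rate achievable in the absence of secondary interference. -/
theorem stmt1 (p a pI cI Rbar PS : ℝ)
    (hp : 0 < p) (ha : 0 < a) (hpI : 0 ≤ pI) (hcI : cI ∈ Set.Icc (0:ℝ) 1)
    (hR : 0 < Rbar) (hPS : 0 ≤ PS) :
    (∃ pS cS : ℝ, pS ∈ Set.Icc 0 PS ∧ cS ∈ Set.Icc (0:ℝ) 1 ∧
      Rpu p a pI cI pS cS ≥ Rbar) ↔ Rpu p a pI cI 0 0 ≥ Rbar := by
  constructor
  · rintro ⟨pS, cS, ⟨h0, -⟩, ⟨hc0, hc1⟩, h⟩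
    refine le_trans h ?_
    obtain ⟨hi0, hi1⟩ := hcI
    unfold Rpu
    have hx : 0 ≤ a * pS := by positivity
    have hy0 : 0 ≤ a * pS * cS := by positivity
    have hy : a * pS * cS ≤ a * pS := mul_le_of_le_one_right hx hc1
    have hk0 : 0 ≤ pI * cI := by positivity
    have hk : pI * cI ≤ pI := mul_le_of_le_one_right hpI hi1
    simp only [mul_zero, zero_mul, add_zero, zero_add]
    generalize a * pS * cS = y at *
    generalize a * pS = x at *
    generalize pI * cI = k at *
    have hD : 0 < (1 + x + pI)^2 - (y + k)^2 := by
      have : 0 < (1 + x + pI - (y + k)) * (1 + x + pI + (y + k)) :=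
        mul_pos (by linarith) (by linarith)
      linarith
    have hN : 0 < (1 + p + x + pI)^2 - (y + k)^2 := by
      have : 0 < (1 + p + x + pI - (y + k)) * (1 + p + x + pI + (y + k)) :=
        mul_pos (by linarith) (by linarith)
      linarith
    have hD0 : 0 < (1 + pI)^2 - k^2 := by
      have : 0 < (1 + pI - k) * (1 + pI + k) :=
        mul_pos (by linarith) (by linarith)
      linarith
    apply mul_le_mul_of_nonneg_left _ (by norm_num)
    apply Real.logb_le_logb_of_le (by norm_num) (div_pos hN hD)
    rw [div_le_div_iff₀ hD hD0]
    have h1 : (1 + pI - k) * (1 + pI + k + 2 * x) ≤ (1 + x + pI)^2 - (y + k)^2 := by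
      nlinarith [mul_nonneg (sub_nonneg.2 hy) (by linarith : 0 ≤ x + y + 2 * k)]
    have h2 : (2 * (1 + pI) + 2 * x + p) * (1 + pI + k) ≤
        (2 * (1 + pI) + p) * (1 + pI + k + 2 * x) := by
      nlinarith [mul_nonneg hx (by linarith : 0 ≤ 1 + pI + p - k)]
    have h3 := mul_le_mul_of_nonneg_left h2 (by linarith : 0 ≤ 1 + pI - k)
    have h4 := mul_le_mul_of_nonneg_left h1 (by linarith : 0 ≤ 2 * (1 + pI) + p)
    have h5 : (2 * (1 + pI) + 2 * x + p) * ((1 + pI)^2 - k^2) ≤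
        (2 * (1 + pI) + p) * ((1 + x + pI)^2 - (y + k)^2) := by
      linarith
    have h6 := mul_le_mul_of_nonneg_left h5 hp.le
    linarith
  · intro h
    exact ⟨0, 0, ⟨le_rfl, hPS⟩, ⟨le_rfl, zero_le_one⟩, h⟩
end

section
/- Fix p > 0, a > 0, p_I ≥ 0, c_I ∈ [0,1], R̄ > 0 and β = 1 − p/(2^{2·R̄} − 1). Let q : ℝ → ℝ be differentiable at a point c ∈ [0,1] and satisfy the tightness identity a²·q(x)²·(1 − x²) = (1 − β)·(p + 2·(1 + a·q(x) + p_I)) − 1 − 2·(a·q(x) + p_I) − p_I²·(1 − c_I²) − 2·a·q(x)·p_I·(1 − x·c_I) for all x in an open interval containing c. If a·q(c)·(1 − c²) + p_I·(1 − c·c_I) + β > 0, then the derivative of q at c equals q(c)·(a·q(c)·c + p_I·c_I) / (a·q(c)·(1 − c²) + p_I·(1 − c·c_I) + β). -/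
/-- Tightness identity characterizing `q x`, the maximum secondary transmit power
at circularity coefficient `x` such that the primary rate constraint is tight. -/
def Tight (p a pI cI β : ℝ) (q : ℝ → ℝ) (x : ℝ) : Prop :=
  a^2 * (q x)^2 * (1 - x^2) =
    (1 - β) * (p + 2*(1 + a * q x + pI)) - 1 - 2*(a * q x + pI)
      - pI^2 * (1 - cI^2) - 2 * a * q x * pI * (1 - x * cI)

/-- closed-form derivative of the tolerable-power function `q`. -/
theorem stmt2 (p a pI cI Rbar β c : ℝ) (q : ℝ → ℝ)
    (hp : 0 < p) (ha : 0 < a) (hpI : 0 ≤ pI) (hcI : cI ∈ Set.Icc (0:ℝ) 1)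
    (hR : 0 < Rbar) (hβ : β = 1 - p / ((2:ℝ) ^ (2 * Rbar) - 1))
    (hc : c ∈ Set.Icc (0:ℝ) 1)
    (hdiff : DifferentiableAt ℝ q c)
    (htight : ∃ ε > (0:ℝ), ∀ x ∈ Set.Ioo (c - ε) (c + ε), Tight p a pI cI β q x)
    (hden : 0 < a * q c * (1 - c^2) + pI * (1 - c * cI) + β) :
    deriv q c = q c * (a * q c * c + pI * cI) /
      (a * q c * (1 - c^2) + pI * (1 - c * cI) + β) := by
  obtain ⟨ε, hε, ht⟩ := htight
  have hq := hdiff.hasDerivAt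
  have hid := hasDerivAt_id' c
  have hL := ((hq.pow 2).const_mul (a^2)).mul ((hid.pow 2).const_sub 1)
  have hR1 := ((((((hq.const_mul a).const_add 1).add_const pI).const_mul 2).const_add p).const_mul (1 - β)).sub_const 1
  have hR2 := (hR1.sub (((hq.const_mul a).add_const pI).const_mul 2)).sub_const (pI^2 * (1 - cI^2))
  have hR3 := hR2.sub (((hq.const_mul (2 * a)).mul_const pI).mul ((hid.mul_const cI).const_sub 1))
  have hev : ∀ᶠ x in nhds c, Tight p a pI cI β q x :=
    Filter.eventually_of_mem (Ioo_mem_nhds (by linarith) (by linarith)) ht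
  have hL' := hL.congr_of_eventuallyEq (f₁ := _) (hev.mono fun x hx => Eq.symm (by
    simpa [Tight] using hx))
  have h := hL'.unique hR3
  simp at h
  rw [eq_div_iff hden.ne']
  have h2 : (2 * a) ≠ 0 := by positivity
  apply mul_left_cancel₀ h2
  linear_combination h
end

section
/- Fix p > 0, a > 0, p_I ≥ 0, c_I ∈ [0,1], R̄ > 0 and β = 1 − p/(2^{2·R̄} − 1). Let q : ℝ → ℝ be differentiable at c ∈ [0,1], satisfy the tightness identity on an open interval containing c, with q(c) > 0 and a·q(c)·(1 − c²) + p_I·(1 − c·c_I) + β > 0. Then the function f(x) = R_S(q(x), x) has nonnegative derivative at c if and only if a·q(c)·c·(1 − (p_I + β)/a) + p_I·c_I·(1 + q(c)) ≥ 0. -/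
/-- Secondary-user rate after zero-forcing. -/
noncomputable def RS (pS cS : ℝ) : ℝ :=
  (1/2) * Real.logb 2 (1 + pS * (pS * (1 - cS^2) + 2))

/-- Lemma 2: the secondary rate along the tight constraint,
`f x = R_S(q x, x)`, is non-decreasing at `c` iff
`a·q(c)·c·(1 − (p_I + β)/a) + p_I·c_I·(1 + q(c)) ≥ 0`. -/
theorem stmt3 (p a pI cI Rbar β c : ℝ) (q : ℝ → ℝ)
    (hp : 0 < p) (ha : 0 < a) (hpI : 0 ≤ pI) (hcI : cI ∈ Set.Icc (0:ℝ) 1)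
    (hR : 0 < Rbar) (hβ : β = 1 - p / ((2:ℝ) ^ (2 * Rbar) - 1))
    (hc : c ∈ Set.Icc (0:ℝ) 1)
    (hdiff : DifferentiableAt ℝ q c)
    (htight : ∃ ε > (0:ℝ), ∀ x ∈ Set.Ioo (c - ε) (c + ε), Tight p a pI cI β q x)
    (hq : 0 < q c)
    (hden : 0 < a * q c * (1 - c^2) + pI * (1 - c * cI) + β) :
    0 ≤ deriv (fun x => RS (q x) x) c ↔
      0 ≤ a * q c * c * (1 - (pI + β) / a) + pI * cI * (1 + q c) := by
  obtain ⟨ε, hε, ht⟩ := htight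
  obtain ⟨q', hq'⟩ : ∃ q', HasDerivAt q q' c := ⟨_, hdiff.hasDerivAt⟩
  have hs : 0 ≤ 1 - c^2 := by nlinarith [hc.1, hc.2]
  have h1 : HasDerivAt (fun x : ℝ => 1 - x^2) (-(2 * c)) c := by
    simpa using ((hasDerivAt_id c).pow 2).const_sub 1
  have h2 : HasDerivAt (fun x : ℝ => 1 - x * cI) (-cI) c := by
    simpa using ((hasDerivAt_id c).mul_const cI).const_sub 1
  have hL := ((hq'.pow 2).const_mul (a^2)).mul h1
  have hA := (((hq'.const_mul a).const_add 1).add_const pI).const_mul 2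
  have hR1 := (((hA.const_add p).const_mul (1 - β)).sub_const 1).sub
    (((hq'.const_mul a).add_const pI).const_mul 2)
  have hR2 := (hR1.sub_const (pI^2 * (1 - cI^2))).sub
    (((hq'.const_mul (2 * a)).mul_const pI).mul h2)
  have hEq := hL.congr_of_eventuallyEq (f₁ := _) (Filter.EventuallyEq.symm
    (Filter.eventuallyEq_of_mem (Ioo_mem_nhds (by linarith : c - ε < c) (by linarith : c < c + ε))
      (fun x hx => ht x hx)))
  have key := hEq.unique hR2
  simp only [Pi.pow_apply, Pi.mul_apply] at key
  norm_num at key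
  have key2 : q' * (a * q c * (1 - c^2) + pI * (1 - c * cI) + β) = q c * (a * c * q c + pI * cI) := by
    apply mul_left_cancel₀ (mul_ne_zero two_ne_zero ha.ne')
    linear_combination key
  have hpos : 0 < 1 + q c * (q c * (1 - c^2) + 2) := by positivity
  have hG : HasDerivAt (fun x => 1 + q x * (q x * (1 - x^2) + 2))
      (2 * (q' * (q c * (1 - c^2) + 1) - c * (q c)^2)) c := by
    have := (hq'.mul ((hq'.mul h1).add_const 2)).const_add 1
    refine this.congr_deriv ?_
    simp only [Pi.mul_apply]
    ring
  have hF : HasDerivAt (fun x => RS (q x) x)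
      ((1/2) * (2 * (q' * (q c * (1 - c^2) + 1) - c * (q c)^2) /
        (1 + q c * (q c * (1 - c^2) + 2)) / Real.log 2)) c :=
    ((hG.log hpos.ne').div_const (Real.log 2)).const_mul (1/2)
  rw [hF.deriv]
  have hlog : 0 < Real.log 2 := Real.log_pos one_lt_two
  set D := a * q c * (1 - c^2) + pI * (1 - c * cI) + β with hD
  set P := 1 + q c * (q c * (1 - c^2) + 2) with hP
  set E := a * q c * c * (1 - (pI + β) / a) + pI * cI * (1 + q c) with hE
  have hE2 : E = a * q c * c - q c * c * (pI + β) + pI * cI * (1 + q c) := by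
    rw [hE]; field_simp
  have hrel : (q' * (q c * (1 - c^2) + 1) - c * (q c)^2) * D = q c * E := by
    rw [hE2, sub_mul]
    linear_combination (q c * (1 - c^2) + 1) * key2 - c * (q c)^2 * hD
  have hfin : (1/2) * (2 * (q' * (q c * (1 - c^2) + 1) - c * (q c)^2) / P / Real.log 2)
      = (q c / (D * P * Real.log 2)) * E := by
    field_simp
    linear_combination hrel
  rw [hfin]
  exact mul_nonneg_iff_of_pos_left (by positivity)
end

section
/- Fix p > 0, a > 0, p_I > 0, c_I ∈ (0,1], R̄ > 0 and β = 1 − p/(2^{2·R̄} − 1). Let q : ℝ → ℝ be differentiable on [0,1], satisfy the tightness identity for all x ∈ [0,1], with q(x) > 0 and a·q(x)·(1 − x²) + p_I·(1 − x·c_I) + β > 0 for all x ∈ [0,1]. Then there exists c_R with 0 < c_R ≤ 1 such that the function f(x) = R_S(q(x), x) is monotonically non-decreasing on [0, c_R] and monotonically non-increasing on [c_R, 1]. -/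
/-- Lemma 1: there exists `0 < c_R ≤ 1` such that
`f x = R_S(q x, x)` is non-decreasing on `[0, c_R]` and non-increasing on `[c_R, 1]`. -/
theorem stmt4 (p a pI cI Rbar β : ℝ) (q : ℝ → ℝ)
    (hp : 0 < p) (ha : 0 < a) (hpI : 0 < pI) (hcI : cI ∈ Set.Ioc (0:ℝ) 1)
    (hR : 0 < Rbar) (hβ : β = 1 - p / ((2:ℝ) ^ (2 * Rbar) - 1))
    (hdiff : DifferentiableOn ℝ q (Set.Icc 0 1))
    (htight : ∀ x ∈ Set.Icc (0:ℝ) 1, Tight p a pI cI β q x)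
    (hq : ∀ x ∈ Set.Icc (0:ℝ) 1, 0 < q x)
    (hden : ∀ x ∈ Set.Icc (0:ℝ) 1,
      0 < a * q x * (1 - x^2) + pI * (1 - x * cI) + β) :
    ∃ cR : ℝ, 0 < cR ∧ cR ≤ 1 ∧
      MonotoneOn (fun x => RS (q x) x) (Set.Icc 0 cR) ∧
      AntitoneOn (fun x => RS (q x) x) (Set.Icc cR 1) := by
  obtain ⟨hc0, hc1⟩ := hcI
  obtain ⟨d, hd⟩ : ∃ d, d = pI * cI := ⟨_, rfl⟩
  have hdpos : 0 < d := hd ▸ mul_pos hpI hc0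
  obtain ⟨g, hg⟩ : ∃ g, g = a - β - pI := ⟨_, rfl⟩
  obtain ⟨K, hK⟩ : ∃ K, K = (1 - β) * (p + 2 + 2 * pI) - 1 - 2 * pI - pI^2 * (1 - cI^2) :=
    ⟨_, rfl⟩
  have key : ∀ x ∈ Set.Icc (0:ℝ) 1,
      a^2 * (q x)^2 * (1 - x^2) + 2 * a * q x * (β + pI - d * x) = K := by
    intro x hx
    have h := htight x hx
    unfold Tight at h
    rw [hK, hd]
    linear_combination h
  have hD : ∀ x ∈ Set.Icc (0:ℝ) 1, 0 < a * q x * (1 - x^2) + (β + pI - d * x) := by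
    intro x hx
    have h := hden x hx
    rw [hd]
    linarith
  have hder : ∀ x ∈ Set.Ioo (0:ℝ) 1, HasDerivAt q (deriv q x) x := by
    intro x hx
    exact ((hdiff x ⟨hx.1.le, hx.2.le⟩).differentiableAt (Icc_mem_nhds hx.1 hx.2)).hasDerivAt
  have hder2 : ∀ x ∈ Set.Ioo (0:ℝ) 1,
      (a * q x * (1 - x^2) + (β + pI - d * x)) * deriv q x = a * x * (q x)^2 + d * q x := by
    intro x hx
    have h1 := hder x hx
    have h2 : HasDerivAt (fun x => a^2 * (q x)^2 * (1 - x^2) + 2 * a * q x * (β + pI - d * x))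
        ((a^2 * (2 * q x * deriv q x)) * (1 - x^2) + a^2 * (q x)^2 * (-(2 * x))
          + ((2 * a * deriv q x) * (β + pI - d * x) + 2 * a * q x * (-d))) x := by
      have e1 : HasDerivAt (fun x : ℝ => 1 - x^2) (-(2 * x)) x := by
        simpa using (hasDerivAt_pow 2 x).const_sub 1
      have e2 : HasDerivAt (fun x : ℝ => β + pI - d * x) (-d) x := by
        simpa using ((hasDerivAt_id x).const_mul d).const_sub (β + pI)
      have e3 : HasDerivAt (fun x => a^2 * (q x)^2) (a^2 * (2 * q x * deriv q x)) x := by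
        simpa using (h1.pow 2).const_mul (a^2)
      exact (e3.mul e1).add ((h1.const_mul (2 * a)).mul e2)
    have h3 : HasDerivAt (fun x => a^2 * (q x)^2 * (1 - x^2) + 2 * a * q x * (β + pI - d * x))
        0 x := by
      refine (hasDerivAt_const x K).congr_of_eventuallyEq ?_
      filter_upwards [Icc_mem_nhds hx.1 hx.2] with y hy
      exact key y hy
    have h4 := h2.unique h3
    have ha2 : 2 * a ≠ 0 := by positivity
    apply mul_left_cancel₀ ha2
    linear_combination h4
  have hqmono : MonotoneOn q (Set.Icc 0 1) := by
    apply monotoneOn_of_deriv_nonneg (convex_Icc 0 1) hdiff.continuousOn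
    · rw [interior_Icc]
      exact hdiff.mono Set.Ioo_subset_Icc_self
    · rw [interior_Icc]
      intro x hx
      have hx' := Set.Ioo_subset_Icc_self hx
      have h1 := hder2 x hx
      have h2 := hD x hx'
      have h3 := hq x hx'
      have h4 := hx.1
      refine nonneg_of_mul_nonneg_right ?_ h2
      rw [h1]
      positivity
  obtain ⟨S, hS⟩ : ∃ S : ℝ → ℝ, S = fun x => q x * (g * x + d) + d := ⟨_, rfl⟩
  have hScont : ContinuousOn S (Set.Icc 0 1) := by
    rw [hS]
    exact (hdiff.continuousOn.mul (by fun_prop)).add continuousOn_const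
  have hSanti : ∀ x ∈ Set.Icc (0:ℝ) 1, ∀ y ∈ Set.Icc (0:ℝ) 1, x ≤ y → S x ≤ 0 → S y ≤ S x := by
    intro x hx y hy hxy h
    simp only [hS] at h ⊢
    have h1 := hq x hx
    have h2 := hqmono hx hy hxy
    have h3 : g * x + d < 0 := by
      by_contra hc
      push Not at hc
      nlinarith [mul_nonneg h1.le hc]
    have hg0 : g < 0 := by
      by_contra hc
      push Not at hc
      nlinarith [mul_nonneg hc hx.1]
    have h4 : g * y ≤ g * x := mul_le_mul_of_nonpos_left hxy hg0.le
    have h5 := mul_nonneg (sub_nonneg.2 h2) (neg_nonneg.2 h3.le)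
    have h6 := mul_nonneg (hq y hy).le (sub_nonneg.2 h4)
    nlinarith
  have hS0 : 0 < S 0 := by
    have := hq 0 (by simp)
    simp only [hS]
    simp only [mul_zero, zero_add]
    positivity
  have hhd : ∀ x ∈ Set.Ioo (0:ℝ) 1, HasDerivAt (fun x => q x * (g + d * x))
      (deriv q x * (g + d * x) + q x * d) x := by
    intro x hx
    have e2 : HasDerivAt (fun x : ℝ => g + d * x) d x := by
      simpa using ((hasDerivAt_id x).const_mul d).const_add g
    exact (hder x hx).mul e2
  have hsign : ∀ x ∈ Set.Ioo (0:ℝ) 1,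
      (a * q x * (1 - x^2) + (β + pI - d * x)) * (deriv q x * (g + d * x) + q x * d)
        = a * q x * S x := by
    intro x hx
    have h := hder2 x hx
    simp only [hS]
    subst hg
    linear_combination (a - β - pI + d * x) * h
  have hhc : ContinuousOn (fun x => q x * (g + d * x)) (Set.Icc 0 1) :=
    hdiff.continuousOn.mul (by fun_prop)
  have hmono : ∀ x ∈ Set.Icc (0:ℝ) 1, ∀ y ∈ Set.Icc (0:ℝ) 1,
      q x * (g + d * x) ≤ q y * (g + d * y) → RS (q x) x ≤ RS (q y) y := by
    intro x hx y hy h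
    unfold RS
    have hx2 : 0 ≤ 1 - x^2 := by nlinarith [hx.1, hx.2]
    have h1 := hq x hx
    have h2 := key x hx
    have h3 := key y hy
    have h4 : a^2 * (q x * (q x * (1 - x^2) + 2)) ≤ a^2 * (q y * (q y * (1 - y^2) + 2)) := by
      have e : ∀ z, a^2 * (q z)^2 * (1 - z^2) + 2 * a * q z * (β + pI - d * z) = K →
          a^2 * (q z * (q z * (1 - z^2) + 2)) = K + 2 * a * (q z * (g + d * z)) := by
        intro z hz
        subst hg
        linear_combination hz
      rw [e x h2, e y h3]
      have := mul_le_mul_of_nonneg_left h (by positivity : 0 ≤ 2 * a)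
      linarith
    have h5 := le_of_mul_le_mul_left h4 (by positivity)
    have h6 : 0 < 1 + q x * (q x * (1 - x^2) + 2) := by positivity
    have h7 := Real.logb_le_logb_of_le (b := 2) (by norm_num) h6 (by linarith :
      1 + q x * (q x * (1 - x^2) + 2) ≤ 1 + q y * (q y * (1 - y^2) + 2))
    linarith
  have hc : ∃ c, 0 < c ∧ c ≤ 1 ∧ (∀ x ∈ Set.Ioo 0 c, 0 ≤ S x) ∧ (∀ x ∈ Set.Ioo c 1, S x ≤ 0) := by
    have h1m : (1:ℝ) ∈ Set.Icc (0:ℝ) 1 := by simp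
    by_cases h1 : 0 ≤ S 1
    · refine ⟨1, one_pos, le_rfl, ?_, ?_⟩
      · intro x hx
        by_contra hn
        push Not at hn
        linarith [hSanti x (Set.Ioo_subset_Icc_self hx) 1 h1m hx.2.le hn.le]
      · intro x hx
        exact absurd hx.1 (not_lt.2 hx.2.le)
    · push Not at h1
      obtain ⟨c, hcm, hcS⟩ := intermediate_value_Icc' (zero_le_one) hScont ⟨h1.le, hS0.le⟩
      have hcp : 0 < c := by
        rcases hcm.1.lt_or_eq with h | h
        · exact h
        · rw [← h] at hcS
          linarith
      refine ⟨c, hcp, hcm.2, ?_, ?_⟩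
      · intro x hx
        by_contra hn
        push Not at hn
        linarith [hSanti x ⟨hx.1.le, hx.2.le.trans hcm.2⟩ c hcm hx.2.le hn.le]
      · intro x hx
        linarith [hSanti c hcm x ⟨hcm.1.trans hx.1.le, hx.2.le⟩ hx.1.le hcS.le]
  obtain ⟨c, hcp, hcl, hl, hr⟩ := hc
  have sub1 : Set.Icc 0 c ⊆ Set.Icc (0:ℝ) 1 := Set.Icc_subset_Icc_right hcl
  have sub2 : Set.Icc c 1 ⊆ Set.Icc (0:ℝ) 1 := Set.Icc_subset_Icc_left hcp.le
  refine ⟨c, hcp, hcl, ?_, ?_⟩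
  · have hm : MonotoneOn (fun x => q x * (g + d * x)) (Set.Icc 0 c) := by
      apply monotoneOn_of_deriv_nonneg (convex_Icc 0 c) (hhc.mono sub1)
      · rw [interior_Icc]
        intro x hx
        exact (hhd x ⟨hx.1, hx.2.trans_le hcl⟩).differentiableAt.differentiableWithinAt
      · rw [interior_Icc]
        intro x hx
        have hx' : x ∈ Set.Ioo (0:ℝ) 1 := ⟨hx.1, hx.2.trans_le hcl⟩
        have hx2 := Set.Ioo_subset_Icc_self hx'
        rw [(hhd x hx').deriv]
        refine nonneg_of_mul_nonneg_right ?_ (hD x hx2)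
        rw [hsign x hx']
        exact mul_nonneg (mul_pos ha (hq x hx2)).le (hl x hx)
    intro x hx y hy hxy
    exact hmono x (sub1 hx) y (sub1 hy) (hm hx hy hxy)
  · have hm : AntitoneOn (fun x => q x * (g + d * x)) (Set.Icc c 1) := by
      apply antitoneOn_of_deriv_nonpos (convex_Icc c 1) (hhc.mono sub2)
      · rw [interior_Icc]
        intro x hx
        exact (hhd x ⟨hcp.trans hx.1, hx.2⟩).differentiableAt.differentiableWithinAt
      · rw [interior_Icc]
        intro x hx
        have hx' : x ∈ Set.Ioo (0:ℝ) 1 := ⟨hcp.trans hx.1, hx.2⟩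
        have hx2 := Set.Ioo_subset_Icc_self hx'
        rw [(hhd x hx').deriv]
        by_contra hn
        push Not at hn
        have h1 := mul_pos (hD x hx2) hn
        rw [hsign x hx'] at h1
        have := mul_nonpos_of_nonneg_of_nonpos (mul_pos ha (hq x hx2)).le (hr x hx)
        linarith
    intro x hx y hy hxy
    exact hmono y (sub2 hy) x (sub2 hx) (hm hx hy hxy)
end

section
/- Fix p > 0, a > 0, p_I > 0, c_I ∈ (0,1], R̄ > 0 and β = 1 − p/(2^{2·R̄} − 1). Let q : ℝ → ℝ be differentiable at 0, satisfy the tightness identity on an open interval containing 0, with q(0) > 0 and a·q(0) + p_I + β > 0. Then the function f(x) = R_S(q(x), x) has strictly positive derivative at x = 0; in particular, improper signaling (c_S > 0) strictly improves the secondary rate regardless of the value of the interference channel gain a, whenever the primary receiver is corrupted by improper noise (p_I·c_I > 0). -/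
/-- when the primary receiver is corrupted by improper noise
(`p_I·c_I > 0`), the secondary rate along the tight constraint has strictly
positive derivative at `c_S = 0`, i.e. improper signaling strictly helps
regardless of the interference gain `a`. -/
theorem stmt5 (p a pI cI Rbar β : ℝ) (q : ℝ → ℝ)
    (hp : 0 < p) (ha : 0 < a) (hpI : 0 < pI) (hcI : cI ∈ Set.Ioc (0:ℝ) 1)
    (hR : 0 < Rbar) (hβ : β = 1 - p / ((2:ℝ) ^ (2 * Rbar) - 1))
    (hdiff : DifferentiableAt ℝ q 0)
    (htight : ∃ ε > (0:ℝ), ∀ x ∈ Set.Ioo (-ε) ε, Tight p a pI cI β q x)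
    (hq : 0 < q 0)
    (hden : 0 < a * q 0 + pI + β) :
    0 < deriv (fun x => RS (q x) x) 0 := by
  obtain ⟨ε, hε, ht⟩ := htight
  obtain ⟨hc0, hc1⟩ := hcI
  have hd := hdiff.hasDerivAt
  generalize deriv q 0 = d at hd
  have hid := hasDerivAt_id' (0:ℝ)
  have hL : HasDerivAt (fun x => a^2 * (q x)^2 * (1 - x^2)) (2 * a^2 * q 0 * d) 0 := by
    have h := ((hd.fun_pow 2).const_mul (a^2)).fun_mul ((hid.fun_pow 2).const_sub 1)
    refine h.congr_deriv ?_
    norm_num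
    ring
  have hRt : HasDerivAt (fun x => (1 - β) * (p + 2*(1 + a * q x + pI)) - 1 - 2*(a * q x + pI)
      - pI^2 * (1 - cI^2) - 2 * a * q x * pI * (1 - x * cI))
      ((1 - β) * (2 * (a * d)) - 2 * (a * d) - (2 * a * d * pI - 2 * a * q 0 * pI * cI)) 0 := by
    have haq := hd.const_mul a
    have h1 := ((((haq.const_add 1).add_const pI).const_mul 2).const_add p).const_mul (1 - β)
    have h2 := (haq.add_const pI).const_mul 2
    have h3 := ((hd.const_mul (2 * a)).mul_const pI).fun_mul ((hid.mul_const cI).const_sub 1)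
    have h := (((h1.sub_const 1).fun_sub h2).sub_const (pI^2 * (1 - cI^2))).fun_sub h3
    refine h.congr_deriv ?_
    ring
  have heq : (fun x => a^2 * (q x)^2 * (1 - x^2)) =ᶠ[nhds 0]
      (fun x => (1 - β) * (p + 2*(1 + a * q x + pI)) - 1 - 2*(a * q x + pI)
      - pI^2 * (1 - cI^2) - 2 * a * q x * pI * (1 - x * cI)) := by
    filter_upwards [Ioo_mem_nhds (neg_lt_zero.mpr hε) hε] with x hx
    exact ht x hx
  have hE := hL.unique (hRt.congr_of_eventuallyEq heq)
  have hE2 : a * (d * (a * q 0 + pI + β)) = a * (q 0 * pI * cI) := by linarith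
  have hE3 := mul_left_cancel₀ ha.ne' hE2
  have hdpos : 0 < d := by
    have : 0 < d * (a * q 0 + pI + β) := by rw [hE3]; positivity
    exact pos_of_mul_pos_left this hden.le
  have hlog2 : 0 < Real.log 2 := Real.log_pos (by norm_num)
  have hin : HasDerivAt (fun x => 1 + q x * (q x * (1 - x^2) + 2)) (d * (q 0 + 2) + q 0 * d) 0 := by
    have h := (hd.fun_mul ((hd.fun_mul ((hid.fun_pow 2).const_sub 1)).add_const 2)).const_add 1
    refine h.congr_deriv ?_
    norm_num
  have hpos : (0:ℝ) < 1 + q 0 * (q 0 * (1 - 0^2) + 2) := by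
    norm_num
    positivity
  have hF := ((hin.log hpos.ne').div_const (Real.log 2)).const_mul (1/2 : ℝ)
  have : deriv (fun x => RS (q x) x) 0 = _ := hF.deriv
  rw [this]
  positivity
end

section
/- Fix p > 0, a > 0, p_I ≥ 0, c_I ∈ [0,1], R̄ > 0 and β = 1 − p/(2^{2·R̄} − 1), and assume a ≥ p_I + β. Let q : ℝ → ℝ be differentiable on [0,1], satisfy the tightness identity for all x ∈ [0,1], with q(x) > 0 and a·q(x)·(1 − x²) + p_I·(1 − x·c_I) + β > 0 for all x ∈ [0,1]. Then the function f(x) = R_S(q(x), x) is monotonically non-decreasing on all of [0,1]. -/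
/-- if `a ≥ p_I + β`, the secondary rate along the tight constraint,
`f x = R_S(q x, x)`, is monotonically non-decreasing on all of `[0,1]`. -/
theorem stmt6 (p a pI cI Rbar β : ℝ) (q : ℝ → ℝ)
    (hp : 0 < p) (ha : 0 < a) (hpI : 0 ≤ pI) (hcI : cI ∈ Set.Icc (0:ℝ) 1)
    (hR : 0 < Rbar) (hβ : β = 1 - p / ((2:ℝ) ^ (2 * Rbar) - 1))
    (haβ : a ≥ pI + β)
    (hdiff : DifferentiableOn ℝ q (Set.Icc 0 1))
    (htight : ∀ x ∈ Set.Icc (0:ℝ) 1, Tight p a pI cI β q x)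
    (hq : ∀ x ∈ Set.Icc (0:ℝ) 1, 0 < q x)
    (hden : ∀ x ∈ Set.Icc (0:ℝ) 1,
      0 < a * q x * (1 - x^2) + pI * (1 - x * cI) + β) :
    MonotoneOn (fun x => RS (q x) x) (Set.Icc 0 1) := by
  intro x hx y hy hxy
  simp only [RS]
  have tx := htight x hx
  have ty := htight y hy
  have qx := hq x hx
  have qy := hq y hy
  have dx := hden x hx
  have dy := hden y hy
  obtain ⟨hx0, hx1⟩ := hx
  obtain ⟨hy0, hy1⟩ := hy
  obtain ⟨hc0, hc1⟩ := hcI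
  unfold Tight at tx ty
  generalize q x = u at *
  generalize q y = v at *
  have hsq : x^2 ≤ y^2 := by nlinarith
  have hpc : 0 ≤ pI * cI := mul_nonneg hpI hc0
  have hpcxy : pI * cI * x ≤ pI * cI * y := mul_le_mul_of_nonneg_left hxy hpc
  have hav : 0 < a * v := mul_pos ha qy
  have huv : u ≤ v := by
    by_contra h
    push Not at h
    have h1 : 0 < a * v * (1 - x^2) + pI * (1 - x * cI) + β := by
      have := mul_le_mul_of_nonneg_left hsq hav.le
      nlinarith
    have h2 : 0 < a * (u - v) * ((a * u * (1 - x^2) + pI * (1 - x * cI) + β)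
        + (a * v * (1 - x^2) + pI * (1 - x * cI) + β)) :=
      mul_pos (mul_pos ha (sub_pos.2 h)) (add_pos dx h1)
    have h3 : 0 ≤ (a * v)^2 * (y^2 - x^2) := mul_nonneg (sq_nonneg _) (sub_nonneg.2 hsq)
    have h4 : 0 ≤ a * v * (pI * cI * y - pI * cI * x) :=
      mul_nonneg hav.le (sub_nonneg.2 hpcxy)
    linarith
  have hD : 0 ≤ a - β - pI + pI * cI * x := by
    have := mul_nonneg hpc hx0
    linarith
  have key : u * (u * (1 - x^2) + 2) ≤ v * (v * (1 - y^2) + 2) := by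
    have h1 : 0 ≤ a * (v - u) * (a - β - pI + pI * cI * x) :=
      mul_nonneg (mul_nonneg ha.le (sub_nonneg.2 huv)) hD
    have h4 : 0 ≤ a * v * (pI * cI * y - pI * cI * x) :=
      mul_nonneg hav.le (sub_nonneg.2 hpcxy)
    have h5 : a^2 * (u * (u * (1 - x^2) + 2)) ≤ a^2 * (v * (v * (1 - y^2) + 2)) := by
      linarith
    exact le_of_mul_le_mul_left h5 (by positivity)
  have hpos : 0 < 1 + u * (u * (1 - x^2) + 2) := by
    have : 0 ≤ 1 - x^2 := by nlinarith
    positivity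
  have := Real.logb_le_logb_of_le (b := 2) (by norm_num) hpos
    (show 1 + u * (u * (1 - x^2) + 2) ≤ 1 + v * (v * (1 - y^2) + 2) by linarith)
  linarith
end

section
/- Fix p > 0, a > 0, p_I > 0, c_I ∈ (0,1], R̄ > 0, β = 1 − p/(2^{2·R̄} − 1), and a power budget P_S > 0. Let q : ℝ → ℝ be differentiable and strictly increasing on [0,1], satisfy the tightness identity for all x ∈ [0,1], with q(x) > 0 and a·q(x)·(1 − x²) + p_I·(1 − x·c_I) + β > 0 for all x ∈ [0,1]. Define c_B = sup{ c ∈ [0,1] : q(c) ≤ max(P_S, q(0)) }, c_R = sup{ c ∈ [0,1] : a·q(c)·c·(1 − (p_I + β)/a) + p_I·c_I·(1 + q(c)) ≥ 0 }, c* = min(c_B, c_R) and p* = min(q(c*), P_S). Then for every pair (p_S, c_S) with 0 ≤ p_S ≤ P_S, 0 ≤ c_S ≤ 1 and p_S ≤ q(c_S), one has R_S(p_S, c_S) ≤ R_S(p*, c*); that is, (p*, c*) is an optimal solution of problem 𝒫_IN. -/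
theorem F_mono {u v c : ℝ} (hu : 0 ≤ u) (huv : u ≤ v) (hc0 : 0 ≤ c) (hc1 : c ≤ 1) :
    u * (u * (1 - c^2) + 2) ≤ v * (v * (1 - c^2) + 2) := by
  have h1 : 0 ≤ 1 - c^2 := by nlinarith
  have h2 : u * (1 - c^2) ≤ v * (1 - c^2) := mul_le_mul_of_nonneg_right huv h1
  have h3 : 0 ≤ u * (1 - c^2) := mul_nonneg hu h1
  exact mul_le_mul huv (by linarith) (by linarith) (by linarith)

theorem RS_le {u v c d : ℝ} (hu : 0 ≤ u) (hc0 : 0 ≤ c) (hc1 : c ≤ 1)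
    (h : u * (u * (1 - c^2) + 2) ≤ v * (v * (1 - d^2) + 2)) : RS u c ≤ RS v d := by
  unfold RS
  have h1 : 0 ≤ 1 - c^2 := by nlinarith
  have h2 : 0 ≤ u * (u * (1 - c^2) + 2) := by positivity
  have := Real.logb_le_logb_of_le (b := 2) (by norm_num) (by linarith)
    (show 1 + u * (u * (1 - c^2) + 2) ≤ 1 + v * (v * (1 - d^2) + 2) by linarith)
  linarith

/-- Theorem 1: with `c_B` and `c_R` as below, the pair
`(p* , c*) = (min(q(c*), P_S), min(c_B, c_R))` is an optimal solution of `𝒫_IN`: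
any feasible `(p_S, c_S)` yields a secondary rate not exceeding `R_S(p*, c*)`. -/
theorem stmt7 (p a pI cI Rbar β PS : ℝ) (q : ℝ → ℝ)
    (hp : 0 < p) (ha : 0 < a) (hpI : 0 < pI) (hcI : cI ∈ Set.Ioc (0:ℝ) 1)
    (hR : 0 < Rbar) (hβ : β = 1 - p / ((2:ℝ) ^ (2 * Rbar) - 1)) (hPS : 0 < PS)
    (hdiff : DifferentiableOn ℝ q (Set.Icc 0 1))
    (hmono : StrictMonoOn q (Set.Icc 0 1))
    (htight : ∀ x ∈ Set.Icc (0:ℝ) 1, Tight p a pI cI β q x)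
    (hq : ∀ x ∈ Set.Icc (0:ℝ) 1, 0 < q x)
    (hden : ∀ x ∈ Set.Icc (0:ℝ) 1,
      0 < a * q x * (1 - x^2) + pI * (1 - x * cI) + β)
    (cB cR cstar pstar : ℝ)
    (hcB : cB = sSup {c : ℝ | c ∈ Set.Icc (0:ℝ) 1 ∧ q c ≤ max PS (q 0)})
    (hcR : cR = sSup {c : ℝ | c ∈ Set.Icc (0:ℝ) 1 ∧
      0 ≤ a * q c * c * (1 - (pI + β) / a) + pI * cI * (1 + q c)})
    (hcstar : cstar = min cB cR)
    (hpstar : pstar = min (q cstar) PS) :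
    ∀ pS cS : ℝ, 0 ≤ pS → pS ≤ PS → 0 ≤ cS → cS ≤ 1 → pS ≤ q cS →
      RS pS cS ≤ RS pstar cstar := by
  intro pS cS hpS0 hpSP hcS0 hcS1 hpSq
  obtain ⟨hcI0, hcI1⟩ := hcI
  have hcont : ContinuousOn q (Set.Icc 0 1) := hdiff.continuousOn
  have h0 : (0:ℝ) ∈ Set.Icc (0:ℝ) 1 := by simp
  have hS : cS ∈ Set.Icc (0:ℝ) 1 := ⟨hcS0, hcS1⟩
  have hBpos : 0 < pI * cI := mul_pos hpI hcI0
  set H : ℝ → ℝ := fun c => a * q c * c * (1 - (pI + β) / a) + pI * cI * (1 + q c) with hHdef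
  have hH : ∀ c, H c = q c * c * (a - pI - β) + pI * cI * (1 + q c) := by
    intro c
    simp only [hHdef]
    field_simp
    ring
  have hHcont : ContinuousOn H (Set.Icc 0 1) := by
    simp only [hHdef]
    fun_prop
  set SB := {c : ℝ | c ∈ Set.Icc (0:ℝ) 1 ∧ q c ≤ max PS (q 0)} with hSB
  set SR := {c : ℝ | c ∈ Set.Icc (0:ℝ) 1 ∧ 0 ≤ H c} with hSR
  have hcR' : cR = sSup SR := hcR
  have hSBc : IsCompact SB := by
    have : IsClosed (Set.Icc (0:ℝ) 1 ∩ q ⁻¹' Set.Iic (max PS (q 0))) :=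
      hcont.preimage_isClosed_of_isClosed isClosed_Icc isClosed_Iic
    exact isCompact_Icc.of_isClosed_subset this Set.inter_subset_left
  have hSRc : IsCompact SR := by
    have : IsClosed (Set.Icc (0:ℝ) 1 ∩ H ⁻¹' Set.Ici 0) :=
      hHcont.preimage_isClosed_of_isClosed isClosed_Icc isClosed_Ici
    exact isCompact_Icc.of_isClosed_subset this Set.inter_subset_left
  have h0B : (0:ℝ) ∈ SB := ⟨h0, le_max_right _ _⟩
  have h0R : (0:ℝ) ∈ SR := by
    refine ⟨h0, ?_⟩
    rw [hH]
    have := hq 0 h0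
    simp only [mul_zero, zero_mul, zero_add]
    positivity
  have hcBm : cB ∈ SB := hcB ▸ hSBc.sSup_mem ⟨0, h0B⟩
  have hcRm : cR ∈ SR := hcR' ▸ hSRc.sSup_mem ⟨0, h0R⟩
  have hcBub : ∀ c ∈ SB, c ≤ cB := fun c hc => hcB ▸ le_csSup hSBc.bddAbove hc
  have hcRub : ∀ c ∈ SR, c ≤ cR := fun c hc => hcR' ▸ le_csSup hSRc.bddAbove hc
  have hHpos : ∀ x, 0 ≤ x → x ≤ cR → 0 ≤ H x := by
    intro x hx0 hxR
    have hx : x ∈ Set.Icc (0:ℝ) 1 := ⟨hx0, hxR.trans hcRm.1.2⟩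
    have hqx := hq x hx
    have hqR := hq cR hcRm.1
    rw [hH]
    rcases le_or_gt 0 (a - pI - β) with hA | hA
    · positivity
    · have h1 := hcRm.2
      rw [hH] at h1
      have hle : q x ≤ q cR := hmono.monotoneOn hx hcRm.1 hxR
      by_contra hneg
      push Not at hneg
      have e2 : x * (a - pI - β) ≥ cR * (a - pI - β) := by nlinarith
      have e3 : x * (a - pI - β) + pI * cI < 0 := by
        by_contra h
        push Not at h
        nlinarith [mul_nonneg hqx.le h]
      have e4 : q cR * (x * (a - pI - β) + pI * cI) ≤ q x * (x * (a - pI - β) + pI * cI) := by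
        nlinarith
      have e5 : q cR * (cR * (a - pI - β)) ≤ q cR * (x * (a - pI - β)) :=
        mul_le_mul_of_nonneg_left e2 hqR.le
      nlinarith
  set g : ℝ → ℝ := fun x => q x * ((a - pI - β) + pI * cI * x) with hg
  have hgcont : ContinuousOn g (Set.Icc 0 1) := by
    simp only [hg]
    fun_prop
  have hgd : ∀ x ∈ Set.Ioo (0:ℝ) 1, ∃ D > 0, HasDerivAt g (D * H x) x := by
    intro x hx
    have hxI : x ∈ Set.Icc (0:ℝ) 1 := ⟨hx.1.le, hx.2.le⟩
    have hnh : Set.Icc (0:ℝ) 1 ∈ nhds x := Icc_mem_nhds hx.1 hx.2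
    have hd : HasDerivAt q (deriv q x) x := (hdiff.differentiableAt hnh).hasDerivAt
    have hD := hden x hxI
    have hqx := hq x hxI
    have hid := hasDerivAt_id' x
    have hL : HasDerivAt (fun y => a^2 * (q y)^2 * (1 - y^2) + 2 * a * q y * (β + pI * (1 - y * cI)))
        (a^2 * (2 * q x * deriv q x) * (1 - x^2) + a^2 * (q x)^2 * (-(2 * x))
          + (2 * a * deriv q x * (β + pI * (1 - x * cI)) + 2 * a * q x * (-(pI * cI)))) x := by
      have e1 := ((hd.pow 2).const_mul (a^2)).mul ((hid.pow 2).const_sub 1)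
      have e2 := (hd.const_mul (2*a)).mul ((((hid.mul_const cI).const_sub 1).const_mul pI).const_add β)
      refine HasDerivAt.congr_deriv (e1.add e2) ?_
      simp
    have hC : HasDerivAt (fun y => a^2 * (q y)^2 * (1 - y^2) + 2 * a * q y * (β + pI * (1 - y * cI)))
        0 x := by
      refine (hasDerivAt_const x ((1 - β) * (p + 2*(1 + pI)) - 1 - 2*pI
        - pI^2 * (1 - cI^2))).congr_of_eventuallyEq ?_
      filter_upwards [hnh] with y hy
      have := htight y hy
      unfold Tight at this
      linarith
    have heq := hL.unique hC
    have heq2 : deriv q x * (a * q x * (1 - x^2) + pI * (1 - x * cI) + β)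
        = q x * (a * q x * x + pI * cI) := by
      have : (2 * a) * (deriv q x * (a * q x * (1 - x^2) + pI * (1 - x * cI) + β)
        - q x * (a * q x * x + pI * cI)) = 0 := by linarith
      have := (mul_eq_zero.mp this).resolve_left (by positivity)
      linarith
    refine ⟨q x * a / (a * q x * (1 - x^2) + pI * (1 - x * cI) + β), by positivity, ?_⟩
    have e := hd.mul ((hid.const_mul (pI * cI)).const_add (a - pI - β))
    refine HasDerivAt.congr_deriv e ?_
    have hq' : deriv q x = q x * (a * q x * x + pI * cI)
        / (a * q x * (1 - x^2) + pI * (1 - x * cI) + β) := by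
      rw [eq_div_iff hD.ne']
      exact heq2
    rw [hH, hq']
    generalize hDe : a * q x * (1 - x^2) + pI * (1 - x * cI) + β = D at hD
    field_simp
    rw [← hDe]
    ring
  have hmonog : MonotoneOn g (Set.Icc 0 cR) := by
    apply monotoneOn_of_deriv_nonneg (convex_Icc _ _)
      (hgcont.mono (Set.Icc_subset_Icc_right hcRm.1.2))
    · intro x hx
      rw [interior_Icc] at hx
      obtain ⟨D, _, h⟩ := hgd x ⟨hx.1, hx.2.trans_le hcRm.1.2⟩
      exact h.differentiableAt.differentiableWithinAt
    · intro x hx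
      rw [interior_Icc] at hx
      obtain ⟨D, hD, h⟩ := hgd x ⟨hx.1, hx.2.trans_le hcRm.1.2⟩
      rw [h.deriv]
      exact mul_nonneg hD.le (hHpos x hx.1.le hx.2.le)
  have hantig : AntitoneOn g (Set.Icc cR 1) := by
    apply antitoneOn_of_deriv_nonpos (convex_Icc _ _)
      (hgcont.mono (Set.Icc_subset_Icc_left hcRm.1.1))
    · intro x hx
      rw [interior_Icc] at hx
      obtain ⟨D, _, h⟩ := hgd x ⟨hcRm.1.1.trans_lt hx.1, hx.2⟩
      exact h.differentiableAt.differentiableWithinAt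
    · intro x hx
      rw [interior_Icc] at hx
      obtain ⟨D, hD, h⟩ := hgd x ⟨hcRm.1.1.trans_lt hx.1, hx.2⟩
      rw [h.deriv]
      apply mul_nonpos_of_nonneg_of_nonpos hD.le
      by_contra hn
      push Not at hn
      have := hcRub x ⟨⟨hcRm.1.1.trans hx.1.le, hx.2.le⟩, hn.le⟩
      linarith [hx.1]
  have hFg : ∀ x ∈ Set.Icc (0:ℝ) 1, ∀ y ∈ Set.Icc (0:ℝ) 1, g x ≤ g y →
      q x * (q x * (1 - x^2) + 2) ≤ q y * (q y * (1 - y^2) + 2) := by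
    intro x hx y hy hxy
    have tx := htight x hx
    have ty := htight y hy
    unfold Tight at tx ty
    simp only [hg] at hxy
    have h1 := mul_le_mul_of_nonneg_left hxy (show 0 ≤ 2 * a by positivity)
    have h2 : a^2 * (q x * (q x * (1 - x^2) + 2)) ≤ a^2 * (q y * (q y * (1 - y^2) + 2)) := by
      linarith
    exact le_of_mul_le_mul_left h2 (by positivity)
  apply RS_le hpS0 hcS0 hcS1
  rcases lt_or_ge PS (q 0) with hP | hP
  · have hcB0 : cB = 0 := by
      have h1 := hcBm.2
      rw [max_eq_right hP.le] at h1
      exact le_antisymm ((hmono.le_iff_le hcBm.1 h0).mp h1) hcBm.1.1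
    have hc0 : cstar = 0 := by rw [hcstar, hcB0]; exact min_eq_left hcRm.1.1
    rw [hpstar, hc0, min_eq_right hP.le]
    refine (F_mono hpS0 hpSP hcS0 hcS1).trans ?_
    nlinarith [mul_nonneg (mul_nonneg hPS.le hPS.le) (sq_nonneg cS)]
  · have hcBq : q cB ≤ PS := by
      have := hcBm.2
      rwa [max_eq_left hP] at this
    have hsI : cstar ∈ Set.Icc (0:ℝ) 1 := by
      rw [hcstar]
      exact ⟨le_min hcBm.1.1 hcRm.1.1, (min_le_left _ _).trans hcBm.1.2⟩
    have hsB : cstar ≤ cB := hcstar ▸ min_le_left _ _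
    have hsR : cstar ≤ cR := hcstar ▸ min_le_right _ _
    have hps : pstar = q cstar := by
      rw [hpstar]
      exact min_eq_left ((hmono.monotoneOn hsI hcBm.1 hsB).trans hcBq)
    rw [hps]
    have step := F_mono hpS0 hpSq hcS0 hcS1
    rcases le_or_gt cS cstar with hc | hc
    · exact step.trans (hFg cS hS cstar hsI (hmonog ⟨hcS0, hc.trans hsR⟩ ⟨hsI.1, hsR⟩ hc))
    · rcases le_or_gt cR cB with hRB | hRB
      · have e : cstar = cR := by rw [hcstar]; exact min_eq_right hRB
        rw [e] at hc ⊢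
        exact step.trans (hFg cS hS cR hcRm.1
          (hantig ⟨le_rfl, hcRm.1.2⟩ ⟨hc.le, hcS1⟩ hc.le))
      · have e : cstar = cB := by rw [hcstar]; exact min_eq_left hRB.le
        rw [e] at hc ⊢
        have hqB : PS ≤ q cB := by
          by_contra hlt
          push Not at hlt
          have hSlt : PS < q cS := by
            by_contra hn
            push Not at hn
            have := hcBub cS ⟨hS, hn.trans (le_max_left _ _)⟩
            linarith
          obtain ⟨c, hcm, hce⟩ := intermediate_value_Ioo hc.le
            (hcont.mono (Set.Icc_subset_Icc hcBm.1.1 hcS1)) ⟨hlt, hSlt⟩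
          have := hcBub c ⟨⟨hcBm.1.1.trans hcm.1.le, hcm.2.le.trans hcS1⟩,
            hce.le.trans (le_max_left _ _)⟩
          linarith [hcm.1]
        have hpB : pS ≤ q cB := hpSP.trans hqB
        refine (F_mono hpS0 hpB hcS0 hcS1).trans ?_
        have h1 : cB^2 ≤ cS^2 := by nlinarith [hcBm.1.1]
        have h2 := mul_le_mul_of_nonneg_left h1 (mul_self_nonneg (q cB))
        nlinarith
end

section
/- Fix p > 0, a > 0, p_I ≥ 0, c_I ∈ [0,1], R̄ > 0, β = 1 − p/(2^{2·R̄} − 1), p̄ = p·2^{R̄}/(2^{2·R̄} − 1), and write B₁ = p_I·(1 − c_I) + β and B₂ = p_I·(1 + c_I) + β. Assume B₁ > 0 and p̄² − B₁·B₂ > 0, and let q₁ = (p̄² − B₁·B₂)/(2·a·B₁). Then a·q₁·(1 − (p_I + β)/a) + p_I·c_I·(1 + q₁) ≥ 0 if and only if a ≥ ξ, where ξ = B₁·(p̄² − B₁·B₂)/(p̄² − B₁²). In particular, the circularity coefficient c_R of Theorem 1 equals 1 if and only if a ≥ ξ. -/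
/-- with `q₁ = q(1)` in closed form, the non-decreasing condition at
`c = 1` holds iff `a ≥ ξ`; i.e. `c_R = 1` in Theorem 1 iff `a ≥ ξ`. -/
theorem stmt9 (p a pI cI Rbar β pbar B1 B2 q1 ξ : ℝ)
    (hp : 0 < p) (ha : 0 < a) (hpI : 0 ≤ pI) (hcI : cI ∈ Set.Icc (0:ℝ) 1)
    (hR : 0 < Rbar) (hβ : β = 1 - p / ((2:ℝ) ^ (2 * Rbar) - 1))
    (hpbar : pbar = p * (2:ℝ) ^ Rbar / ((2:ℝ) ^ (2 * Rbar) - 1))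
    (hB1def : B1 = pI * (1 - cI) + β) (hB2def : B2 = pI * (1 + cI) + β)
    (hB1 : 0 < B1) (hnum : 0 < pbar^2 - B1 * B2)
    (hq1 : q1 = (pbar^2 - B1 * B2) / (2 * a * B1))
    (hξ : ξ = B1 * (pbar^2 - B1 * B2) / (pbar^2 - B1^2)) :
    0 ≤ a * q1 * (1 - (pI + β) / a) + pI * cI * (1 + q1) ↔ a ≥ ξ := by
  have hs : 0 ≤ pI * cI := mul_nonneg hpI hcI.1
  have hB : B2 = B1 + 2 * (pI * cI) := by rw [hB1def, hB2def]; ring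
  have hD : 0 < pbar^2 - B1^2 := by
    have := mul_nonneg hB1.le hs
    rw [hB] at hnum
    nlinarith
  have hm : pI + β = B1 + pI * cI := by rw [hB1def]; ring
  have key : a * q1 * (1 - (pI + β) / a) + pI * cI * (1 + q1)
      = (a * (pbar^2 - B1^2) - B1 * (pbar^2 - B1 * B2)) / (2 * a * B1) := by
    rw [hm, hq1, hB]
    field_simp
    ring
  rw [key, hξ, ge_iff_le, div_le_iff₀ hD, le_div_iff₀ (by positivity), zero_mul, sub_nonneg]
end

section
/- Fix p > 0, a > 0, R̄ > 0 and β = 1 − p/(2^{2·R̄} − 1), and set p_I = 0 (proper noise at the primary receiver). Let q : ℝ → ℝ be differentiable at c ∈ (0,1], satisfy the tightness identity (with p_I = 0) on an open interval containing c, with q(c) > 0 and a·q(c)·(1 − c²) + β > 0. Then the function f(x) = R_S(q(x), x) has nonnegative derivative at c if and only if a ≥ β. -/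
/-- Tightness identity with proper noise at the primary receiver (`p_I = 0`):
`a²·q(x)²·(1 − x²) = (1 − β)·(p + 2·(1 + a·q(x))) − 1 − 2·a·q(x)`. -/
def TightProper (p a β : ℝ) (q : ℝ → ℝ) (x : ℝ) : Prop :=
  a^2 * (q x)^2 * (1 - x^2) =
    (1 - β) * (p + 2*(1 + a * q x)) - 1 - 2 * (a * q x)

/-- with proper noise at the primary receiver, the secondary rate
along the tight constraint is non-decreasing at `c ∈ (0,1]` iff `a ≥ β`. -/
theorem stmt10 (p a Rbar β c : ℝ) (q : ℝ → ℝ)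
    (hp : 0 < p) (ha : 0 < a)
    (hR : 0 < Rbar) (hβ : β = 1 - p / ((2:ℝ) ^ (2 * Rbar) - 1))
    (hc : c ∈ Set.Ioc (0:ℝ) 1)
    (hdiff : DifferentiableAt ℝ q c)
    (htight : ∃ ε > (0:ℝ), ∀ x ∈ Set.Ioo (c - ε) (c + ε), TightProper p a β q x)
    (hq : 0 < q c)
    (hden : 0 < a * q c * (1 - c^2) + β) :
    0 ≤ deriv (fun x => RS (q x) x) c ↔ a ≥ β := by
  obtain ⟨hc0, hc1⟩ := hc
  obtain ⟨ε, hε, ht⟩ := htight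
  set d := deriv q c with hd
  have hqd : HasDerivAt q d c := hdiff.hasDerivAt
  have hs : HasDerivAt (fun x : ℝ => 1 - x^2) (-(2 * c)) c := by
    simpa using ((hasDerivAt_id c).pow 2).const_sub 1
  have hF : HasDerivAt (fun x => a^2 * ((q x * q x) * (1 - x^2)) + 2 * a * β * q x)
      (a^2 * ((d * q c + q c * d) * (1 - c^2) + (q c * q c) * (-(2 * c))) + 2 * a * β * d) c :=
    (((hqd.mul hqd).mul hs).const_mul (a^2)).add (hqd.const_mul (2 * a * β))
  have hK : HasDerivAt (fun x => a^2 * ((q x * q x) * (1 - x^2)) + 2 * a * β * q x) 0 c := by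
    refine (hasDerivAt_const c ((1 - β) * (p + 2) - 1)).congr_of_eventuallyEq ?_
    filter_upwards [Ioo_mem_nhds (show c - ε < c by linarith) (show c < c + ε by linarith)] with x hx
    have := ht x hx
    unfold TightProper at this
    linarith
  have h0 := hF.unique hK
  have h1 : d * (a * q c * (1 - c^2) + β) = a * c * (q c)^2 := by
    have h2a : (2 * a) ≠ 0 := by positivity
    apply mul_left_cancel₀ h2a
    linarith
  have hs0 : 0 ≤ 1 - c^2 := by nlinarith
  have hg0 : 0 < 1 + q c * (q c * (1 - c^2) + 2) := by positivity
  have hg : HasDerivAt (fun x => 1 + q x * (q x * (1 - x^2) + 2))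
      (d * (q c * (1 - c^2) + 2) + q c * (d * (1 - c^2) + q c * (-(2 * c)))) c :=
    (hqd.mul ((hqd.mul hs).add_const 2)).const_add 1
  set g' := d * (q c * (1 - c^2) + 2) + q c * (d * (1 - c^2) + q c * (-(2 * c))) with hg'
  have hR' : HasDerivAt (fun x => RS (q x) x)
      ((1/2) * (g' / (1 + q c * (q c * (1 - c^2) + 2)) / Real.log 2)) c :=
    ((hg.log hg0.ne').div_const (Real.log 2)).const_mul (1/2)
  rw [hR'.deriv]
  have hl : 0 < Real.log 2 := Real.log_pos (by norm_num)
  have key : g' * (a * q c * (1 - c^2) + β) = (2 * c * (q c)^2) * (a - β) := by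
    rw [hg']
    linear_combination (2 * q c * (1 - c^2) + 2) * h1
  have e1 : 0 ≤ (1/2) * (g' / (1 + q c * (q c * (1 - c^2) + 2)) / Real.log 2) ↔ 0 ≤ g' := by
    rw [mul_nonneg_iff_of_pos_left (by norm_num), le_div_iff₀ hl, zero_mul,
      le_div_iff₀ hg0, zero_mul]
  have hpos : 0 < 2 * c * (q c)^2 := by positivity
  rw [e1, ← mul_nonneg_iff_of_pos_right hden, key, mul_nonneg_iff_of_pos_left hpos, sub_nonneg]
end

section
/- Let 𝒦 be a finite nonempty index set, a_k > 0 for k ∈ 𝒦 with A = Σ_{k∈𝒦} a_k, let ν'_k > 0 with Σ_{k∈𝒦} ν'_k = 1, let t > 0 and c ∈ [0,1], and assume ν'_k·(t + A) − a_k > 0 for every k. Define p_k = ν'_k·(t + A)/a_k − 1 and c_k = ν'_k·t·c / (ν'_k·(t + A) − a_k). Then: (i) p_k > 0 for all k; (ii) Σ_{k∈𝒦} a_k·p_k = t; (iii) Σ_{k∈𝒦} a_k·p_k·c_k = t·c; and (iv) for every k, R_k(p_k, c_k) = (1/2)·log₂( 1 + (t/A)·((t/A)·(1 − c²) + 2)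 ) + log₂( ν'_k·A / a_k ). -/
/-- Rate of a secondary user after zero-forcing. -/
noncomputable def Rk (pk ck : ℝ) : ℝ :=
  (1/2) * Real.logb 2 (1 + pk * (pk * (1 - ck^2) + 2))

/-- stationarity consequences (Eqs. (27)–(30) in the paper) that
transform the secondary MAC into an equivalent single-user channel with
interference gain `A = Σ_k a_k`. -/
theorem stmt13 {ι : Type*} (𝒦 : Finset ι) (h𝒦 : 𝒦.Nonempty)
    (a ν pk ck : ι → ℝ) (t c : ℝ)
    (ha : ∀ k ∈ 𝒦, 0 < a k) (hν : ∀ k ∈ 𝒦, 0 < ν k)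
    (hνsum : ∑ k ∈ 𝒦, ν k = 1) (ht : 0 < t) (hc : c ∈ Set.Icc (0:ℝ) 1)
    (hpos : ∀ k ∈ 𝒦, 0 < ν k * (t + ∑ j ∈ 𝒦, a j) - a k)
    (hpk : ∀ k ∈ 𝒦, pk k = ν k * (t + ∑ j ∈ 𝒦, a j) / a k - 1)
    (hck : ∀ k ∈ 𝒦, ck k = ν k * t * c / (ν k * (t + ∑ j ∈ 𝒦, a j) - a k)) :
    (∀ k ∈ 𝒦, 0 < pk k) ∧
    (∑ k ∈ 𝒦, a k * pk k = t) ∧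
    (∑ k ∈ 𝒦, a k * pk k * ck k = t * c) ∧
    (∀ k ∈ 𝒦, Rk (pk k) (ck k) =
      (1/2) * Real.logb 2 (1 + (t / ∑ j ∈ 𝒦, a j) *
        ((t / ∑ j ∈ 𝒦, a j) * (1 - c^2) + 2)) +
      Real.logb 2 (ν k * (∑ j ∈ 𝒦, a j) / a k)) := by
  have hA : 0 < ∑ j ∈ 𝒦, a j := Finset.sum_pos ha h𝒦
  have hap : ∀ k ∈ 𝒦, a k * pk k = ν k * (t + ∑ j ∈ 𝒦, a j) - a k := by
    intro k hk
    have h1 := (ha k hk).ne'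
    rw [hpk k hk]
    field_simp
  have hapc : ∀ k ∈ 𝒦, a k * pk k * ck k = ν k * (t * c) := by
    intro k hk
    have h1 := (hpos k hk).ne'
    rw [hap k hk, hck k hk, mul_div_cancel₀ _ h1]
    ring
  refine ⟨?_, ?_, ?_, ?_⟩
  · intro k hk
    have h1 := hpos k hk
    rw [← hap k hk] at h1
    exact (mul_pos_iff_of_pos_left (ha k hk)).1 h1
  · rw [Finset.sum_congr rfl hap, Finset.sum_sub_distrib, ← Finset.sum_mul, hνsum]
    ring
  · rw [Finset.sum_congr rfl hapc, ← Finset.sum_mul, hνsum, one_mul]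
  · intro k hk
    have h1 := hap k hk
    have h2 := hapc k hk
    have hak := ha k hk
    have hνk := hν k hk
    generalize (∑ j ∈ 𝒦, a j) = A at *
    have hy : 0 < ν k * A / a k := by positivity
    have hx : 0 < 1 + (t / A) * ((t / A) * (1 - c^2) + 2) := by
      have h3 : 0 ≤ 1 - c^2 := by nlinarith [hc.1, hc.2]
      positivity
    have e1 : pk k = (ν k * (t + A) - a k) / a k := by
      rw [eq_div_iff hak.ne']; linarith
    have e2 : pk k * ck k = ν k * (t * c) / a k := by
      rw [eq_div_iff hak.ne']; linarith
    have key : 1 + pk k * (pk k * (1 - ck k^2) + 2)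
        = (1 + (t / A) * ((t / A) * (1 - c^2) + 2)) * (ν k * A / a k)^2 := by
      have : 1 + pk k * (pk k * (1 - ck k^2) + 2) = (1 + pk k)^2 - (pk k * ck k)^2 := by ring
      rw [this, e2, e1]
      field_simp
      ring
    unfold Rk
    rw [key, Real.logb_mul hx.ne' (by positivity), Real.logb_pow]
    push_cast
    ring
end

section
/- Let 𝒦 be a finite nonempty index set, a_k > 0 with A = Σ_{k∈𝒦} a_k, ν'_k > 0 with Σ_{k∈𝒦} ν'_k = 1, t > 0, c ∈ [0,1], r ≥ 0 and α_k > 0, with ν'_k·(t + A) − a_k > 0 for all k. Define p_k = ν'_k·(t + A)/a_k − 1, c_k = ν'_k·t·c / (ν'_k·(t + A) − a_k), and D = 1 + (t/A)·((t/A)·(1 − c²) + 2). Then for each k, R_k(p_k, c_k) ≥ α_k·r if and only if ν'_k ≥ 2^{α_k·r}·a_k / (A·√D). -/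
/-- the individual rate constraint `R_k ≥ α_k·r` of the feasibility
problem `𝒫_ℓ` holds iff the normalized multiplier satisfies
`ν'_k ≥ 2^{α_k·r}·a_k / (A·√D)` (Eq. (31) in the paper). -/
theorem stmt14 {ι : Type*} (𝒦 : Finset ι) (h𝒦 : 𝒦.Nonempty)
    (a ν pk ck α : ι → ℝ) (t c r : ℝ)
    (ha : ∀ k ∈ 𝒦, 0 < a k) (hν : ∀ k ∈ 𝒦, 0 < ν k)
    (hνsum : ∑ k ∈ 𝒦, ν k = 1) (ht : 0 < t) (hc : c ∈ Set.Icc (0:ℝ) 1)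
    (hr : 0 ≤ r) (hα : ∀ k ∈ 𝒦, 0 < α k)
    (hpos : ∀ k ∈ 𝒦, 0 < ν k * (t + ∑ j ∈ 𝒦, a j) - a k)
    (hpk : ∀ k ∈ 𝒦, pk k = ν k * (t + ∑ j ∈ 𝒦, a j) / a k - 1)
    (hck : ∀ k ∈ 𝒦, ck k = ν k * t * c / (ν k * (t + ∑ j ∈ 𝒦, a j) - a k))
    (D : ℝ)
    (hD : D = 1 + (t / ∑ j ∈ 𝒦, a j) * ((t / ∑ j ∈ 𝒦, a j) * (1 - c^2) + 2)) :
    ∀ k ∈ 𝒦, (Rk (pk k) (ck k) ≥ α k * r ↔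
      ν k ≥ (2:ℝ) ^ (α k * r) * a k / ((∑ j ∈ 𝒦, a j) * Real.sqrt D)) := by
  intro k hk
  have hA : 0 < ∑ j ∈ 𝒦, a j := Finset.sum_pos ha h𝒦
  have hak := ha k hk
  have hνk := hν k hk
  have hp := hpos k hk
  have h1 := hpk k hk
  have h2 := hck k hk
  generalize (∑ j ∈ 𝒦, a j) = A at *
  have hc2 : 0 ≤ 1 - c^2 := by nlinarith [hc.1, hc.2]
  have hDpos : 0 < D := by rw [hD]; positivity
  have hs : 0 < Real.sqrt D := Real.sqrt_pos.mpr hDpos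
  have hsq : Real.sqrt D ^ 2 = D := Real.sq_sqrt hDpos.le
  have key : 1 + pk k * (pk k * (1 - ck k^2) + 2) = (ν k * (A * Real.sqrt D) / a k)^2 := by
    have e1 : pk k * ck k = ν k * t * c / a k := by
      rw [h1, h2]
      have := hp.ne'
      field_simp
    have e2 : 1 + pk k * (pk k * (1 - ck k^2) + 2) = (1 + pk k)^2 - (pk k * ck k)^2 := by ring
    have e4 : (ν k * (A * Real.sqrt D) / a k)^2 = ν k^2 * A^2 * D / a k^2 := by
      rw [div_pow, mul_pow, mul_pow, hsq]; ring
    rw [e4, e2, e1, h1, hD]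
    field_simp
    ring
  have hx : 0 < ν k * (A * Real.sqrt D) / a k := by positivity
  unfold Rk
  rw [key, Real.logb_pow]
  have e3 : (1/2 : ℝ) * (((2:ℕ):ℝ) * Real.logb 2 (ν k * (A * Real.sqrt D) / a k))
      = Real.logb 2 (ν k * (A * Real.sqrt D) / a k) := by push_cast; ring
  rw [e3, ge_iff_le, ge_iff_le, Real.le_logb_iff_rpow_le (by norm_num) hx, le_div_iff₀ hak,
    div_le_iff₀ (by positivity)]
end

section
/- Fix p > 0, a > 0, p_I ≥ 0, c_I ∈ [0,1], R̄ > 0 and β = 1 − p/(2^{2·R̄} − 1). Let q : ℝ → ℝ be differentiable at c ∈ [0,1], satisfy the tightness identity on an open interval containing c, with q(c) > 0 and a·q(c)·(1 − c²) + p_I·(1 − c·c_I) + β > 0. If in addition a·q(c)·c + p_I·c_I > 0 (which holds, for instance, whenever c > 0, or whenever p_I·c_I > 0), then the derivative of q at c is strictly positive; in particular, the tolerable secondary transmit power q is strictly increasing in the circularity coefficient. -/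
/-- if additionally `a·q(c)·c + p_I·c_I > 0`, the tolerable
secondary power `q` has strictly positive derivative at `c`, i.e. it is strictly
increasing in the circularity coefficient. -/
theorem stmt16 (p a pI cI Rbar β c : ℝ) (q : ℝ → ℝ)
    (hp : 0 < p) (ha : 0 < a) (hpI : 0 ≤ pI) (hcI : cI ∈ Set.Icc (0:ℝ) 1)
    (hR : 0 < Rbar) (hβ : β = 1 - p / ((2:ℝ) ^ (2 * Rbar) - 1))
    (hc : c ∈ Set.Icc (0:ℝ) 1)
    (hdiff : DifferentiableAt ℝ q c)
    (htight : ∃ ε > (0:ℝ), ∀ x ∈ Set.Ioo (c - ε) (c + ε), Tight p a pI cI β q x)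
    (hq : 0 < q c)
    (hden : 0 < a * q c * (1 - c^2) + pI * (1 - c * cI) + β)
    (hnum : 0 < a * q c * c + pI * cI) :
    0 < deriv q c := by
  obtain ⟨ε, hε, ht⟩ := htight
  have hd : HasDerivAt q (deriv q c) c := hdiff.hasDerivAt
  generalize deriv q c = d at hd
  have hx : HasDerivAt (fun x : ℝ => x) 1 c := hasDerivAt_id' c
  have hL := (((hd.mul hd).const_mul (a^2)).mul ((hx.mul hx).const_sub 1)).add
    ((hd.const_mul (2 * a * β + 2 * a * pI)).sub ((hd.mul hx).const_mul (2 * a * pI * cI)))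
  have hK := hasDerivAt_const c ((1 - β) * (p + 2*(1 + pI)) - 1 - 2 * pI - pI^2 * (1 - cI^2))
  have hev := Filter.EventuallyEq.hasDerivAt_iff (x := c) (f' := 0)
    (f₀ := fun _ : ℝ => (1 - β) * (p + 2*(1 + pI)) - 1 - 2 * pI - pI^2 * (1 - cI^2))
    (f₁ := fun x : ℝ => a^2 * (q x * q x) * (1 - x * x)
      + ((2 * a * β + 2 * a * pI) * q x - 2 * a * pI * cI * (q x * x))) (by
      filter_upwards [Ioo_mem_nhds (show c - ε < c by linarith) (show c < c + ε by linarith)]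
        with x hx
      have := ht x hx
      unfold Tight at this
      linarith)
  have h0 := HasDerivAt.unique hL (hev.mp hK)
  simp only [Pi.mul_apply] at h0
  have key : (a * d) * (a * q c * (1 - c^2) + pI * (1 - c * cI) + β)
      = a * q c * (a * q c * c + pI * cI) := by linarith
  have h1 : 0 < (a * d) * (a * q c * (1 - c^2) + pI * (1 - c * cI) + β) := by
    rw [key]; positivity
  exact (mul_pos_iff_of_pos_left ha).mp ((mul_pos_iff_of_pos_right hden).mp h1)
end
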